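/- Let d ≥ 1 and n ≥ 1 be integers and let T be a nonempty subset of ℕ_0^d. If there exist points α and β in E_n^∞(T) such that every coordinate of β − α is a positive integer, then E_n^∞(T) = E_1^∞(T ∪ {α, β}) = Λ(T) ∩ ℕ_0^d. -/

import Mathlib

open MeasureTheory
open scoped Classical ENNReal

noncomputable section

/-- The `d`-dimensional torus, modelled as `d` copies of `ℝ/ℤ`,
whose product `volume` measure is the normalized Haar measure. -/
abbrev Torus (d : ℕ) := Fin d → AddCircle (1 : ℝ)

/-- The character `z ↦ z^α` on the torus. -/
def torusChar {d : ℕ} (α : Fin d → ℤ) (x : Torus d) : ℂ :=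
  ∏ j, fourier (α j) (x j)

/-- The trigonometric polynomial with frequencies in `F` and coefficients `a`. -/
def trigPoly {d : ℕ} (F : Finset (Fin d → ℤ)) (a : (Fin d → ℤ) → ℂ) (x : Torus d) : ℂ :=
  ∑ α ∈ F, a α * torusChar α x

/-- The set `ℕ₀^d` of multi-indices with nonnegative entries. -/
def NN (d : ℕ) : Set (Fin d → ℤ) := {α | ∀ j, 0 ≤ α j}

/-- `Λ` is a coset in `ℤ^d`, i.e. a translate of a subgroup. -/
def IsCoset {d : ℕ} (Λ : Set (Fin d → ℤ)) : Prop :=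
  ∃ (x : Fin d → ℤ) (H : AddSubgroup (Fin d → ℤ)),
    Λ = (x + ·) '' (H : Set (Fin d → ℤ))

/-- `Λ` is a contractive projection set for `L^p(𝕋^d)`:
the projection onto frequencies in `Λ` is contractive on trigonometric polynomials. -/
def IsContractiveLp (d : ℕ) (p : ℝ≥0∞) (Λ : Set (Fin d → ℤ)) : Prop :=
  ∀ (F : Finset (Fin d → ℤ)) (a : (Fin d → ℤ) → ℂ),
    eLpNorm (trigPoly (F.filter (· ∈ Λ)) a) p volume ≤ eLpNorm (trigPoly F a) p volume

/-- `Γ` is a contractive projection set for `H^p(𝕋^d)`: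
the projection onto frequencies in `Γ` is contractive on analytic polynomials. -/
def IsContractiveHp (d : ℕ) (p : ℝ≥0∞) (Γ : Set (Fin d → ℤ)) : Prop :=
  ∀ F : Finset (Fin d → ℤ), ↑F ⊆ NN d → ∀ a : (Fin d → ℤ) → ℂ,
    eLpNorm (trigPoly (F.filter (· ∈ Γ)) a) p volume ≤ eLpNorm (trigPoly F a) p volume

/-- `Γ` has dimension `k`: the subgroup generated by the differences `γ - γ₀` has rank `k`. -/
def HasDim {d : ℕ} (Γ : Set (Fin d → ℤ)) (k : ℕ) : Prop :=
  ∀ γ₀ ∈ Γ, Module.finrank ℤ (Submodule.span ℤ ((· - γ₀) '' Γ)) = k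

/-- `H^p(𝕋^d)` enjoys the contractive restriction property of dimension `k`:
every `k`-dimensional contractive projection set for `H^p(𝕋^d)` is the restriction
of a coset in `ℤ^d` to `ℕ₀^d`. -/
def ContractiveRestrictionProperty (d : ℕ) (p : ℝ≥0∞) (k : ℕ) : Prop :=
  ∀ Γ : Set (Fin d → ℤ), Γ.Nonempty → Γ ⊆ NN d → HasDim Γ k → IsContractiveHp d p Γ →
    ∃ Λ : Set (Fin d → ℤ), IsCoset Λ ∧ Γ = Λ ∩ NN d

/-- The coset `Λ(Γ)` in `ℤ^d` generated by `Γ`. -/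
def cosetGen {d : ℕ} (Γ : Set (Fin d → ℤ)) : Set (Fin d → ℤ) :=
  ⋃ γ₀ ∈ Γ, (γ₀ + ·) '' (AddSubgroup.closure ((· - γ₀) '' Γ) : Set (Fin d → ℤ))

/-- The `n`-extension `E_n(Γ)`: all points of `Λ(Γ) ∩ ℕ₀^d` at distance at most `n` from `Γ`. -/
def Eext {d : ℕ} (n : ℕ) (Γ : Set (Fin d → ℤ)) : Set (Fin d → ℤ) :=
  {lam | lam ∈ cosetGen Γ ∩ NN d ∧ ∃ γ ∈ Γ, ∃ m : (Fin d → ℤ) →₀ ℤ,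
    (↑m.support : Set (Fin d → ℤ)) ⊆ Γ \ {γ} ∧
    lam = γ + ∑ α ∈ m.support, m α • (α - γ) ∧
    (∑ α ∈ m.support, max (m α) 0) ≤ (n : ℤ) ∧
    (∑ α ∈ m.support, max (-(m α)) 0) ≤ (n : ℤ)}

/-- Iterated `n`-extensions `E_n^k(Γ)`. -/
def EextIter {d : ℕ} (n : ℕ) : ℕ → Set (Fin d → ℤ) → Set (Fin d → ℤ)
  | 0, Γ => Eext n Γ
  | (k + 1), Γ => Eext n (EextIter n k Γ)

/-- The `n`-completion `E_n^∞(Γ)`. -/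
def EextInf {d : ℕ} (n : ℕ) (Γ : Set (Fin d → ℤ)) : Set (Fin d → ℤ) :=
  ⋃ k, EextIter n k Γ

/-- The subgroup generated by all differences. -/
def diffGrp {d : ℕ} (Γ : Set (Fin d → ℤ)) : AddSubgroup (Fin d → ℤ) :=
  AddSubgroup.closure {v | ∃ a ∈ Γ, ∃ b ∈ Γ, v = a - b}

lemma mem_cosetGen {d : ℕ} {Γ : Set (Fin d → ℤ)} {γ : Fin d → ℤ} (hγ : γ ∈ Γ) (x : Fin d → ℤ) :
    x ∈ cosetGen Γ ↔ x - γ ∈ diffGrp Γ := by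
  have key : ∀ γ₀ ∈ Γ, AddSubgroup.closure ((· - γ₀) '' Γ) = diffGrp Γ := by
    intro γ₀ h₀
    apply le_antisymm
    · rw [AddSubgroup.closure_le]
      rintro _ ⟨a, ha, rfl⟩
      exact AddSubgroup.subset_closure ⟨a, ha, γ₀, h₀, rfl⟩
    · unfold diffGrp
      rw [AddSubgroup.closure_le]
      rintro _ ⟨a, ha, b, hb, rfl⟩
      have h1 : a - γ₀ ∈ AddSubgroup.closure ((· - γ₀) '' Γ) :=
        AddSubgroup.subset_closure ⟨a, ha, rfl⟩
      have h2 : b - γ₀ ∈ AddSubgroup.closure ((· - γ₀) '' Γ) :=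
        AddSubgroup.subset_closure ⟨b, hb, rfl⟩
      have := AddSubgroup.sub_mem _ h1 h2
      simpa using this
  constructor
  · intro hx
    simp only [cosetGen, Set.mem_iUnion] at hx
    obtain ⟨γ₀, h₀, v, hv, rfl⟩ := hx
    rw [key γ₀ h₀] at hv
    have h1 : γ₀ - γ ∈ diffGrp Γ := AddSubgroup.subset_closure ⟨γ₀, h₀, γ, hγ, rfl⟩
    have := AddSubgroup.add_mem _ h1 hv
    convert this using 1
    simp only
    abel
  · intro hx
    simp only [cosetGen, Set.mem_iUnion]
    refine ⟨γ, hγ, x - γ, ?_, by simp⟩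
    rw [key γ hγ]
    exact hx

lemma subset_cosetGen {d : ℕ} (Γ : Set (Fin d → ℤ)) : Γ ⊆ cosetGen Γ := by
  intro x hx
  rw [mem_cosetGen hx]
  simp [AddSubgroup.zero_mem]

lemma cosetGen_subset {d : ℕ} {Γ Γ' : Set (Fin d → ℤ)} (h : Γ' ⊆ cosetGen Γ) :
    cosetGen Γ' ⊆ cosetGen Γ := by
  intro x hx
  have hx' := hx
  simp only [cosetGen, Set.mem_iUnion] at hx'
  obtain ⟨γ', h', -⟩ := hx'
  have h2 := h h'
  simp only [cosetGen, Set.mem_iUnion] at h2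
  obtain ⟨γ, hγ, -⟩ := h2
  have hle : diffGrp Γ' ≤ diffGrp Γ := by
    unfold diffGrp
    rw [AddSubgroup.closure_le]
    rintro _ ⟨a, ha, b, hb, rfl⟩
    have h1 := (mem_cosetGen hγ a).1 (h ha)
    have h2 := (mem_cosetGen hγ b).1 (h hb)
    have := AddSubgroup.sub_mem _ h1 h2
    simpa [diffGrp] using this
  rw [mem_cosetGen hγ]
  have h1 := hle ((mem_cosetGen h' x).1 hx)
  have h2 := (mem_cosetGen hγ γ').1 (h h')
  have := AddSubgroup.add_mem _ h1 h2
  simpa using this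

lemma subset_Eext {d n : ℕ} {Γ : Set (Fin d → ℤ)} (h : Γ ⊆ NN d) : Γ ⊆ Eext n Γ := by
  intro x hx
  refine ⟨⟨subset_cosetGen Γ hx, h hx⟩, x, hx, 0, ?_, ?_, ?_, ?_⟩ <;> simp

lemma Eext_subset_NN {d n : ℕ} (Γ : Set (Fin d → ℤ)) : Eext n Γ ⊆ NN d := fun _ hx => hx.1.2

lemma iter_subset_NN {d n : ℕ} (Γ : Set (Fin d → ℤ)) (k : ℕ) : EextIter n k Γ ⊆ NN d := by
  cases k <;> exact Eext_subset_NN _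

lemma iter_mono {d n : ℕ} (Γ : Set (Fin d → ℤ)) : Monotone (fun k => EextIter n k Γ) :=
  monotone_nat_of_le_succ fun k => subset_Eext (iter_subset_NN Γ k)

lemma iter_subset_coset {d n : ℕ} (Γ : Set (Fin d → ℤ)) (k : ℕ) :
    EextIter n k Γ ⊆ cosetGen Γ := by
  induction k with
  | zero => exact fun x hx => hx.1.1
  | succ k ih => exact fun x hx => cosetGen_subset ih hx.1.1

lemma add_sub_mem_Eext {d n : ℕ} (hn : 1 ≤ n) {Γ : Set (Fin d → ℤ)} (h : Γ ⊆ NN d)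
    {x y z : Fin d → ℤ} (hx : x ∈ Γ) (hy : y ∈ Γ) (hz : z ∈ Γ) (hp : x + y - z ∈ NN d) :
    x + y - z ∈ Eext n Γ := by
  have hn' : (1 : ℤ) ≤ n := by exact_mod_cast hn
  by_cases hzx : z = x
  · subst hzx
    simpa using subset_Eext h hy
  by_cases hzy : z = y
  · subst hzy
    simpa using subset_Eext h hx
  have hc : x + y - z ∈ cosetGen Γ := by
    rw [mem_cosetGen hx]
    exact AddSubgroup.subset_closure ⟨y, hy, z, hz, by abel⟩
  refine ⟨⟨hc, hp⟩, x, hx, ?_⟩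
  by_cases hyx : y = x
  · subst hyx
    have hs : (Finsupp.single z (-1 : ℤ)).support = {z} :=
      Finsupp.support_single_ne_zero _ (by norm_num)
    refine ⟨Finsupp.single z (-1), ?_, ?_, ?_, ?_⟩
    · rw [hs]; simp [hz, hzx]
    · rw [hs]; simp; abel
    · rw [hs]; simp
    · rw [hs]; simpa using hn'
  · have hs : (Finsupp.single y (1 : ℤ) + Finsupp.single z (-1 : ℤ)).support = {y, z} := by
      ext w
      by_cases h1 : w = y
      · subst h1; simp [Finsupp.single_apply, hzy]
      · by_cases h2 : w = z
        · subst h2; simp [Finsupp.single_apply, Ne.symm hzy]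
        · simp [Finsupp.single_apply, h1, h2, Ne.symm h1, Ne.symm h2]
    have hyz : y ≠ z := Ne.symm hzy
    refine ⟨Finsupp.single y 1 + Finsupp.single z (-1), ?_, ?_, ?_, ?_⟩
    · rw [hs]
      intro w hw
      simp at hw
      rcases hw with rfl | rfl
      · exact ⟨hy, hyx⟩
      · exact ⟨hz, hzx⟩
    · rw [hs, Finset.sum_pair hyz]
      simp [Finsupp.single_apply, hyz, hzy]
      abel
    · rw [hs, Finset.sum_pair hyz]
      simpa [Finsupp.single_apply, hyz, hzy] using hn'
    · rw [hs, Finset.sum_pair hyz]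
      simpa [Finsupp.single_apply, hyz, hzy] using hn'

lemma closed_main {d : ℕ} {S : Set (Fin d → ℤ)} (hS : S ⊆ NN d)
    (hcl : ∀ x ∈ S, ∀ y ∈ S, ∀ z ∈ S, x + y - z ∈ NN d → x + y - z ∈ S)
    {α β : Fin d → ℤ} (hα : α ∈ S) (hβ : β ∈ S) (hpos : ∀ j, 0 < (β - α) j) :
    ∀ v ∈ diffGrp S, ∀ s ∈ S, s + v ∈ NN d → s + v ∈ S := by
  have hP : ∀ a ∈ S, ∀ b ∈ S, ∀ s ∈ S, s + (a - b) ∈ NN d → s + (a - b) ∈ S := by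
    intro a ha b hb s hs h
    have e : s + (a - b) = s + a - b := by abel
    rw [e] at h ⊢
    exact hcl s hs a ha b hb h
  have hup : ∀ K : ℕ, ∀ s ∈ S, s + (K : ℤ) • (β - α) ∈ S := by
    intro K
    induction K with
    | zero => intro s hs; simpa using hs
    | succ K ih =>
      intro s hs
      have h1 := ih s hs
      have e : s + ((K + 1 : ℕ) : ℤ) • (β - α) = s + (K : ℤ) • (β - α) + (β - α) := by
        push_cast; rw [add_smul, one_smul]; abel
      rw [e]
      apply hP β hβ α hα _ h1
      intro j
      have a1 := hS h1 j
      have a2 := hpos j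
      exact add_nonneg a1 a2.le
  have hdown : ∀ K : ℕ, ∀ s ∈ NN d, s + (K : ℤ) • (β - α) ∈ S → s ∈ S := by
    intro K
    induction K with
    | zero => intro s hs h; simpa using h
    | succ K ih =>
      intro s hs h
      apply ih s hs
      have e : s + (K : ℤ) • (β - α) = s + ((K + 1 : ℕ) : ℤ) • (β - α) + (α - β) := by
        push_cast; rw [add_smul, one_smul]; abel
      rw [e]
      apply hP α hα β hβ _ h
      rw [← e]
      intro j
      have a1 := hs j
      have a2 := hpos j
      simp only [Pi.add_apply, Pi.smul_apply, smul_eq_mul]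
      positivity
  have hbig : ∀ w : Fin d → ℤ, ∃ K : ℕ, w + (K : ℤ) • (β - α) ∈ NN d := by
    intro w
    refine ⟨∑ j, (w j).natAbs, fun j => ?_⟩
    have a2 := hpos j
    have a3 : (w j).natAbs ≤ ∑ j, (w j).natAbs :=
      Finset.single_le_sum (f := fun j => (w j).natAbs) (fun _ _ => Nat.zero_le _)
        (Finset.mem_univ j)
    simp only [Pi.add_apply, Pi.smul_apply, smul_eq_mul]
    have a4 : -(w j) ≤ ((∑ j, (w j).natAbs : ℕ) : ℤ) := by omega
    have a5 : (0 : ℤ) ≤ ((∑ j, (w j).natAbs : ℕ) : ℤ) := Int.natCast_nonneg _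
    nlinarith
  have hadd : ∀ v w : Fin d → ℤ, (∀ s ∈ S, s + v ∈ NN d → s + v ∈ S) →
      (∀ s ∈ S, s + w ∈ NN d → s + w ∈ S) → (∀ s ∈ S, s + (v + w) ∈ NN d → s + (v + w) ∈ S) := by
    intro v w hv hw s hs h
    obtain ⟨K, hK⟩ := hbig (s + v)
    apply hdown K _ h
    have e1 : s + v + (K : ℤ) • (β - α) = s + (K : ℤ) • (β - α) + v := by abel
    rw [e1] at hK
    have h1 := hv _ (hup K s hs) hK
    have e2 : s + (v + w) + (K : ℤ) • (β - α) = s + (K : ℤ) • (β - α) + v + w := by abel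
    rw [e2]
    apply hw _ h1
    rw [← e2]
    intro j
    have a1 := h j
    have a2 := hpos j
    have a3 : 0 ≤ (K : ℤ) * (β - α) j := by positivity
    exact add_nonneg a1 a3
  suffices H : ∀ v ∈ diffGrp S, (∀ s ∈ S, s + v ∈ NN d → s + v ∈ S) ∧
      (∀ s ∈ S, s + -v ∈ NN d → s + -v ∈ S) from fun v hv => (H v hv).1
  intro v hv
  refine AddSubgroup.closure_induction (p := fun v _ => (∀ s ∈ S, s + v ∈ NN d → s + v ∈ S) ∧
      (∀ s ∈ S, s + -v ∈ NN d → s + -v ∈ S)) ?_ ?_ ?_ ?_ hv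
  · rintro _ ⟨a, ha, b, hb, rfl⟩
    refine ⟨hP a ha b hb, ?_⟩
    rw [neg_sub]
    exact hP b hb a ha
  · simp only [neg_zero, add_zero, and_self]
    exact fun s hs _ => hs
  · intro x y _ _ hx hy
    refine ⟨hadd x y hx.1 hy.1, ?_⟩
    rw [neg_add]
    exact hadd _ _ hx.2 hy.2
  · intro x _ hx
    refine ⟨hx.2, ?_⟩
    rw [neg_neg]
    exact hx.1

lemma subset_EextInf {d n : ℕ} {Γ : Set (Fin d → ℤ)} (h : Γ ⊆ NN d) : Γ ⊆ EextInf n Γ :=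
  fun _ hx => Set.mem_iUnion.2 ⟨0, subset_Eext h hx⟩

lemma EextInf_subset {d n : ℕ} (Γ : Set (Fin d → ℤ)) : EextInf n Γ ⊆ cosetGen Γ ∩ NN d :=
  Set.iUnion_subset fun k _ hx => ⟨iter_subset_coset Γ k hx, iter_subset_NN Γ k hx⟩

lemma EextInf_eq {d n : ℕ} (hn : 1 ≤ n) {Γ : Set (Fin d → ℤ)}
    (h : Γ ⊆ NN d) {α β : Fin d → ℤ} (hα : α ∈ EextInf n Γ) (hβ : β ∈ EextInf n Γ)
    (hpos : ∀ j, 0 < (β - α) j) : EextInf n Γ = cosetGen Γ ∩ NN d := by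
  apply Set.Subset.antisymm (EextInf_subset Γ)
  rintro x ⟨hx, hx0⟩
  have hx' := hx
  simp only [cosetGen, Set.mem_iUnion] at hx'
  obtain ⟨γ, hγ, -⟩ := hx'
  have hcl : ∀ x ∈ EextInf n Γ, ∀ y ∈ EextInf n Γ, ∀ z ∈ EextInf n Γ,
      x + y - z ∈ NN d → x + y - z ∈ EextInf n Γ := by
    intro x hx y hy z hz hp
    obtain ⟨i, hi⟩ := Set.mem_iUnion.1 hx
    obtain ⟨j, hj⟩ := Set.mem_iUnion.1 hy
    obtain ⟨k, hk⟩ := Set.mem_iUnion.1 hz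
    refine Set.mem_iUnion.2 ⟨i + j + k + 1, ?_⟩
    exact add_sub_mem_Eext hn (iter_subset_NN Γ (i + j + k))
      (iter_mono Γ (by omega : i ≤ i + j + k) hi)
      (iter_mono Γ (by omega : j ≤ i + j + k) hj)
      (iter_mono Γ (by omega : k ≤ i + j + k) hk) hp
  have hle : diffGrp Γ ≤ diffGrp (EextInf n Γ) := by
    apply AddSubgroup.closure_mono
    rintro _ ⟨a, ha, b, hb, rfl⟩
    exact ⟨a, subset_EextInf h ha, b, subset_EextInf h hb, rfl⟩
  have := closed_main (fun y hy => (EextInf_subset Γ hy).2) hcl hα hβ hpos (x - γ)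
    (hle ((mem_cosetGen hγ x).1 hx)) γ (subset_EextInf h hγ)
  simp only [add_sub_cancel] at this
  exact this hx0

/-- If `α, β ∈ E_n^∞(T)` and all coordinates of `β - α` are positive, then
`E_n^∞(T) = E_1^∞(T ∪ {α, β}) = Λ(T) ∩ ℕ₀^d`. -/
theorem plus_completion (d n : ℕ) (hd : 1 ≤ d) (hn : 1 ≤ n) (T : Set (Fin d → ℤ))
    (hne : T.Nonempty) (hT : T ⊆ NN d) (α β : Fin d → ℤ)
    (hα : α ∈ EextInf n T) (hβ : β ∈ EextInf n T) (hpos : ∀ j, 0 < (β - α) j) :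
    EextInf n T = EextInf 1 (T ∪ {α, β}) ∧ EextInf n T = cosetGen T ∩ NN d := by
  have h1 := EextInf_eq hn hT hα hβ hpos
  have hsub : T ∪ {α, β} ⊆ cosetGen T ∩ NN d := by
    rintro x (hx | rfl | rfl)
    · exact ⟨subset_cosetGen T hx, hT hx⟩
    · exact EextInf_subset T hα
    · exact EextInf_subset T hβ
  have hN : T ∪ {α, β} ⊆ NN d := fun x hx => (hsub hx).2
  have h2 := EextInf_eq (n := 1) le_rfl hN (α := α) (β := β)
    (subset_EextInf hN (by simp)) (subset_EextInf hN (by simp)) hpos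
  have h3 : cosetGen (T ∪ {α, β}) = cosetGen T :=
    Set.Subset.antisymm (cosetGen_subset fun x hx => (hsub hx).1)
      (cosetGen_subset fun x hx => subset_cosetGen _ (Or.inl hx))
  exact ⟨by rw [h1, h2, h3], h1⟩

end
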